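/- For every linear automorphism A of ℝ^d with det A > 0 and every open neighbourhood U of 0 in ℝ^d, there exists a C^∞ diffeomorphism F : ℝ^d → ℝ^d such that F(0) = 0, the total derivative of F at 0 equals A, and F(x) = x for all x ∉ U. -/

import Mathlib

open Filter Topology in
theorem oneParam_mem {n : Type*} [Fintype n] [DecidableEq n] (P : Matrix n n ℝ → Prop)
    (hmul : ∀ A B, P A → P B → P (A * B)) (hn : ∀ᶠ M in 𝓝 (1 : Matrix n n ℝ), P M)
    (γ : ℝ → Matrix n n ℝ) (hc : Continuous γ) (h0 : γ 0 = 1)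
    (hadd : ∀ s t, γ (s + t) = γ s * γ t) (t : ℝ) : P (γ t) := by
  have h1 : Tendsto (fun k : ℕ => γ (t / (k + 1 : ℕ))) atTop (𝓝 1) := by
    rw [← h0]
    refine (hc.tendsto 0).comp ?_
    exact (tendsto_const_div_atTop_nhds_zero_nat t).comp (tendsto_add_atTop_nat 1)
  obtain ⟨k, hk⟩ := (h1.eventually hn).exists
  have key : ∀ m : ℕ, P (γ ((m + 1 : ℕ) * (t / (k + 1 : ℕ)))) := by
    intro m
    induction m with
    | zero => simpa using hk
    | succ m ih =>
      have := hmul _ _ ih hk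
      rw [← hadd] at this
      convert this using 2
      push_cast
      ring
  have := key k
  rwa [mul_div_cancel₀] at this
  positivity

open Filter Topology in
theorem signPair_mem {n : Type*} [Fintype n] [DecidableEq n] (P : Matrix n n ℝ → Prop)
    (hmul : ∀ A B, P A → P B → P (A * B))
    (ht : ∀ i j, i ≠ j → ∀ c, P (Matrix.transvection i j c)) (i j : n) (hij : i ≠ j) :
    P (Matrix.diagonal (fun k => if k = i ∨ k = j then (-1 : ℝ) else 1)) := by
  have hw := hmul _ _ (hmul _ _ (ht i j hij 1) (ht j i hij.symm (-1))) (ht i j hij 1)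
  have := hmul _ _ hw hw
  convert this using 1
  have e : Matrix.transvection i j (1:ℝ) * Matrix.transvection j i (-1) * Matrix.transvection i j 1
      = 1 + Matrix.single i j 1 - Matrix.single j i 1 - Matrix.single i i 1
        - Matrix.single j j 1 := by
    simp [Matrix.transvection, mul_add, add_mul, hij.symm, Matrix.single_mul_single_of_ne]
    have : Matrix.single j i (-1:ℝ) = - Matrix.single j i 1 := by rw [Matrix.single_neg]
    rw [this]
    have : Matrix.single i i (-1:ℝ) = - Matrix.single i i 1 := by rw [Matrix.single_neg]
    rw [this]
    have : Matrix.single j j (-1:ℝ) = - Matrix.single j j 1 := by rw [Matrix.single_neg]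
    rw [this]
    have : Matrix.single i j (-1:ℝ) = - Matrix.single i j 1 := by rw [Matrix.single_neg]
    rw [this]
    abel
  have e2 : Matrix.diagonal (fun k => if k = i ∨ k = j then (-1 : ℝ) else 1)
      = 1 - (2:ℝ) • Matrix.single i i 1 - (2:ℝ) • Matrix.single j j 1 := by
    ext a b
    simp only [Matrix.diagonal_apply, Matrix.sub_apply, Matrix.smul_apply, Matrix.one_apply,
      Matrix.single_apply]
    by_cases hab : a = b
    · subst hab
      by_cases h1 : a = i
      · subst h1; simp [hij.symm]; norm_num
      · by_cases h2 : a = j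
        · subst h2; simp [hij]; norm_num
        · simp [h1, h2, Ne.symm h1, Ne.symm h2]
    · have h1 : ¬ (i = a ∧ i = b) := by rintro ⟨rfl, h⟩; exact hab h
      have h2 : ¬ (j = a ∧ j = b) := by rintro ⟨rfl, h⟩; exact hab h
      simp [hab, h1, h2]
  rw [e, e2]
  simp only [mul_add, add_mul, mul_sub, sub_mul, Matrix.single_mul_single_same, mul_one, one_mul,
    Matrix.single_mul_single_of_ne _ _ _ _ hij, Matrix.single_mul_single_of_ne _ _ _ _ hij.symm]
  module

open Filter Topology in
theorem signs_mem {n : Type*} [Fintype n] [DecidableEq n] (P : Matrix n n ℝ → Prop)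
    (hmul : ∀ A B, P A → P B → P (A * B)) (h1 : P 1)
    (ht : ∀ i j, i ≠ j → ∀ c, P (Matrix.transvection i j c)) :
    ∀ (m : ℕ) (s : Finset n), s.card = 2 * m →
    P (Matrix.diagonal (fun k => if k ∈ s then (-1 : ℝ) else 1)) := by
  intro m
  induction m with
  | zero =>
    intro s hs
    have : s = ∅ := by simpa using hs
    subst this
    simpa using h1
  | succ m ih =>
    intro s hs
    obtain ⟨i, hi, j, hj, hij⟩ := Finset.one_lt_card.1 (show 1 < s.card by omega)
    have hj' : j ∈ s.erase i := by simp [hj, hij.symm]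
    have hc : ((s.erase i).erase j).card = 2 * m := by
      rw [Finset.card_erase_of_mem hj', Finset.card_erase_of_mem hi]; omega
    have := hmul _ _ (signPair_mem P hmul ht i j hij) (ih _ hc)
    rw [Matrix.diagonal_mul_diagonal] at this
    refine (congrArg (fun D => P (Matrix.diagonal D)) (funext fun k => ?_)).mpr this
    by_cases hki : k = i
    · subst hki; simp [hi]
    · by_cases hkj : k = j
      · subst hkj; simp [hj]
      · simp [hki, hkj]

open Filter Topology in
theorem posDet_mem {n : Type*} [Fintype n] [DecidableEq n] (P : Matrix n n ℝ → Prop)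
    (hmul : ∀ A B, P A → P B → P (A * B)) (hn : ∀ᶠ M in 𝓝 (1 : Matrix n n ℝ), P M)
    (M : Matrix n n ℝ) (hM : 0 < M.det) : P M := by
  have ht : ∀ i j : n, i ≠ j → ∀ c, P (Matrix.transvection i j c) := by
    intro i j hij c
    refine oneParam_mem P hmul hn (fun t => Matrix.transvection i j t) ?_ (by simp) ?_ c
    · unfold Matrix.transvection
      refine continuous_const.add ?_
      refine continuous_matrix fun a b => ?_
      simp only [Matrix.single_apply]
      split_ifs <;> fun_prop
    · intro s t
      rw [Matrix.transvection_mul_transvection_same _ _ hij]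
  have h1 : P 1 := hn.self_of_nhds
  have hpos : ∀ D : n → ℝ, (∀ i, 0 < D i) → P (Matrix.diagonal D) := by
    intro D hD
    have := oneParam_mem P hmul hn
      (fun t => Matrix.diagonal (fun i => Real.exp (t * Real.log (D i)))) ?_ (by simp) ?_ 1
    · simpa [Real.exp_log, hD] using this
    · refine Continuous.matrix_diagonal ?_
      fun_prop
    · intro s t
      simp [Matrix.diagonal_mul_diagonal, add_mul, Real.exp_add]
  obtain ⟨L, L', D, rfl⟩ := Matrix.Pivot.exists_list_transvec_mul_diagonal_mul_list_transvec M
  have hL : ∀ L : List (Matrix.TransvectionStruct n ℝ),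
      P (L.map Matrix.TransvectionStruct.toMatrix).prod := by
    intro L
    induction L with
    | nil => simpa using h1
    | cons t L ih =>
      simp only [List.map_cons, List.prod_cons]
      exact hmul _ _ (ht t.i t.j t.hij t.c) ih
  refine hmul _ _ (hmul _ _ (hL L) ?_) (hL L')
  simp only [Matrix.det_mul, Matrix.TransvectionStruct.det_toMatrix_prod, one_mul, mul_one,
    Matrix.det_diagonal] at hM
  have hne : ∀ i, D i ≠ 0 := fun i => (Finset.prod_ne_zero_iff.1 hM.ne') i (Finset.mem_univ i)
  set s : Finset n := Finset.univ.filter (fun i => D i < 0) with hs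
  have hD : ∀ i, D i = (if i ∈ s then (-1:ℝ) else 1) * |D i| := by
    intro i
    by_cases h : D i < 0
    · simp [hs, h, abs_of_neg]
    · simp [hs, h, abs_of_nonneg (not_lt.1 h)]
  have hev : Even s.card := by
    by_contra hodd
    rw [Nat.not_even_iff_odd] at hodd
    have e : ∏ i, D i = (-1) ^ s.card * ∏ i, |D i| := by
      rw [Finset.prod_congr rfl (fun i _ => hD i), Finset.prod_mul_distrib]
      congr 1
      simp [Finset.prod_ite, hs]
    rw [e, hodd.neg_one_pow] at hM
    have : 0 ≤ ∏ i, |D i| := Finset.prod_nonneg fun i _ => abs_nonneg _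
    linarith
  obtain ⟨m, hm⟩ := hev
  have := hmul _ _ (signs_mem P hmul h1 ht m s (by omega))
    (hpos (fun i => |D i|) (fun i => abs_pos.2 (hne i)))
  rw [Matrix.diagonal_mul_diagonal] at this
  rwa [← funext hD] at this

/-- `B` is the derivative at `0` of a diffeomorphism fixing `0`, supported in `U`. -/
def Realizes {E : Type*} [NormedAddCommGroup E] [NormedSpace ℝ E] (U : Set E) (B : E →L[ℝ] E) :
    Prop :=
  ∃ F : E ≃ E, ContDiff ℝ (⊤ : ℕ∞) F ∧ ContDiff ℝ (⊤ : ℕ∞) F.symm ∧ F 0 = 0 ∧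
    HasFDerivAt F B 0 ∧ ∀ x ∉ U, F x = x

theorem Realizes.mul {E : Type*} [NormedAddCommGroup E] [NormedSpace ℝ E] {U : Set E}
    {A B : E →L[ℝ] E} (hA : Realizes U A) (hB : Realizes U B) : Realizes U (A * B) := by
  obtain ⟨F, h1, h2, h3, h4, h5⟩ := hA
  obtain ⟨G, g1, g2, g3, g4, g5⟩ := hB
  refine ⟨G.trans F, h1.comp g1, g2.comp h2, by simp [g3, h3], ?_, ?_⟩
  · rw [← g3] at h4
    exact h4.comp 0 g4
  · intro x hx
    simp [g5 x hx, h5 x hx]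

open Filter Topology in
theorem realizes_nhds {E : Type*} [NormedAddCommGroup E] [InnerProductSpace ℝ E]
    [FiniteDimensional ℝ E] (U : Set E) (hU : IsOpen U) (h0 : (0 : E) ∈ U) :
    ∀ᶠ A in 𝓝 (1 : E →L[ℝ] E), Realizes U A := by
  obtain ⟨r, hr, hrU⟩ := Metric.isOpen_iff.1 hU 0 h0
  let φ : ContDiffBump (0 : E) := ⟨r / 2, r, by positivity, by linarith⟩
  have hsm : ContDiff ℝ (⊤ : ℕ∞) (fun x : E => φ x • x) := φ.contDiff.smul contDiff_id
  have hcs : HasCompactSupport (fun x : E => φ x • x) := φ.hasCompactSupport.smul_right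
  obtain ⟨K, hK⟩ := ContDiff.lipschitzWith_of_hasCompactSupport hcs hsm (by simp)
  have hev : ∀ᶠ A in 𝓝 (1 : E →L[ℝ] E), ‖A - 1‖₊ * K < 1 := by
    have hc : Continuous (fun A : E →L[ℝ] E => ‖A - 1‖₊ * K) := by fun_prop
    exact hc.continuousAt.eventually_lt continuousAt_const (by simp)
  filter_upwards [hev] with A hAK
  set B := A - 1 with hB
  let g : E → E := fun x => B (φ x • x)
  have hg : ContDiff ℝ (⊤ : ℕ∞) g := B.contDiff.comp hsm
  have hgl : LipschitzWith (‖B‖₊ * K) g := B.lipschitz.comp hK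
  let f : E → E := fun x => x + g x
  have hf : ContDiff ℝ (⊤ : ℕ∞) f := contDiff_id.add hg
  have happ : ApproximatesLinearOn f ((ContinuousLinearEquiv.refl ℝ E : E ≃L[ℝ] E) : E →L[ℝ] E)
      Set.univ (‖B‖₊ * K) := by
    intro x _ y _
    have := hgl.dist_le_mul x y
    rw [dist_eq_norm, dist_eq_norm] at this
    have e : f x - f y - (ContinuousLinearEquiv.refl ℝ E : E →L[ℝ] E) (x - y) = g x - g y := by
      change x + g x - (y + g y) - (x - y) = g x - g y
      abel
    rw [e]
    exact this
  have hcN : Subsingleton E ∨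
      ‖B‖₊ * K < ‖((ContinuousLinearEquiv.refl ℝ E).symm : E →L[ℝ] E)‖₊⁻¹ := by
    rcases subsingleton_or_nontrivial E with h | h
    · exact Or.inl h
    · right
      have : ‖((ContinuousLinearEquiv.refl ℝ E).symm : E →L[ℝ] E)‖₊ = 1 := by
        ext
        simp
      rw [this]
      simpa using hAK
  let Φ : E ≃ₜ E := happ.toHomeomorph f hcN
  have hΦ : (Φ : E → E) = f := rfl
  have hder : ∀ a, ∃ e : E ≃L[ℝ] E, HasFDerivAt f (e : E →L[ℝ] E) a := by
    intro a
    have hga : HasFDerivAt g (fderiv ℝ g a) a :=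
      (hg.differentiable (by simp)).differentiableAt.hasFDerivAt
    have hn : ‖fderiv ℝ g a‖ < 1 := by
      refine lt_of_le_of_lt (norm_fderiv_le_of_lipschitz ℝ hgl) ?_
      exact_mod_cast hAK
    have hfa : HasFDerivAt f (1 + fderiv ℝ g a) a := (hasFDerivAt_id a).add hga
    let u : (E →L[ℝ] E)ˣ := Units.oneSub (-fderiv ℝ g a) (by simpa using hn)
    refine ⟨ContinuousLinearEquiv.ofUnit u, ?_⟩
    convert hfa using 1
    ext x
    change (1 - -fderiv ℝ g a : E →L[ℝ] E) x = _
    simp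
  choose e he using hder
  refine ⟨Φ.toEquiv, hf, Φ.contDiff_symm (f₀' := e) he hf, ?_, ?_, ?_⟩
  · change (0 : E) + B (φ 0 • 0) = 0
    simp
  · change HasFDerivAt f A 0
    refine HasFDerivAt.congr_of_eventuallyEq A.hasFDerivAt ?_
    filter_upwards [φ.eventuallyEq_one] with x hx
    simp [f, g, hx, hB]
  · intro x hx
    change x + B (φ x • x) = x
    have : φ x = 0 := by
      apply φ.zero_of_le_dist
      by_contra h
      exact hx (hrU (not_le.1 h))
    simp [this]


/-- For every linear automorphism `A` of `ℝ^d` with positive determinant and every open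
neighbourhood `U` of `0`, there is a smooth diffeomorphism `F` of `ℝ^d` fixing `0`, with
derivative `A` at `0`, that agrees with the identity outside `U`. -/
theorem differential_extension_euclidean
    (d : ℕ) (A : EuclideanSpace ℝ (Fin d) ≃ₗ[ℝ] EuclideanSpace ℝ (Fin d))
    (hA : 0 < LinearMap.det (A : EuclideanSpace ℝ (Fin d) →ₗ[ℝ] EuclideanSpace ℝ (Fin d)))
    (U : Set (EuclideanSpace ℝ (Fin d))) (hU : IsOpen U) (h0 : (0 : EuclideanSpace ℝ (Fin d)) ∈ U) :
    ∃ F : EuclideanSpace ℝ (Fin d) ≃ EuclideanSpace ℝ (Fin d),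
      ContDiff ℝ (⊤ : ℕ∞) F ∧ ContDiff ℝ (⊤ : ℕ∞) F.symm ∧ F 0 = 0 ∧
      (∀ v, fderiv ℝ F 0 v = A v) ∧ ∀ x ∉ U, F x = x := by
  have key := posDet_mem (n := Fin d)
    (fun M => Realizes U (Matrix.toEuclideanCLM (n := Fin d) (𝕜 := ℝ) M)) ?_ ?_
    (LinearMap.toMatrix (EuclideanSpace.basisFun (Fin d) ℝ).toBasis
      (EuclideanSpace.basisFun (Fin d) ℝ).toBasis A.toLinearMap) ?_
  · obtain ⟨F, h1, h2, h3, h4, h5⟩ := key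
    refine ⟨F, h1, h2, h3, ?_, h5⟩
    intro v
    rw [h4.fderiv]
    have := LinearMap.toMatrix_mulVec_repr (EuclideanSpace.basisFun (Fin d) ℝ).toBasis
      (EuclideanSpace.basisFun (Fin d) ℝ).toBasis A.toLinearMap v
    ext i
    have hr : ⇑((EuclideanSpace.basisFun (Fin d) ℝ).toBasis.repr v) = v.ofLp := by
      ext k
      simp
    rw [hr] at this
    simpa using congrFun this i
  · intro M N hM hN
    rw [map_mul]
    exact hM.mul hN
  · have hc : Continuous (fun M : Matrix (Fin d) (Fin d) ℝ =>
        Matrix.toEuclideanCLM (n := Fin d) (𝕜 := ℝ) M) :=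
      LinearMap.continuous_of_finiteDimensional
        ((Matrix.toEuclideanCLM (n := Fin d) (𝕜 := ℝ)).toAlgEquiv.toLinearMap)
    have := hc.tendsto 1
    rw [map_one] at this
    exact this.eventually (realizes_nhds U hU h0)
  · rw [LinearMap.det_toMatrix]
    exact hA
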